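/- For the action of Q̂₈ = {±id, ±(i;0), ±j', ±k'} on T = ℍ/𝔞: every point of T whose stabilizer is nontrivial is a 2-torsion point; among the sixteen 2-torsion points, exactly twelve (namely the fixed points of (i;0), j' and k') have stabilizer of order 4, and the remaining four 2-torsion points {1000, 0100, 0010, 1110} form a single Q̂₈-orbit of size 4, each having stabilizer {id, −id} of order 2. In particular the quotient set T/Q̂₈ contains exactly 6 orbits of points with stabilizer of order 4 and exactly 1 orbit of points with stabilizer of order 2. -/

import Mathlib

/- STATEMENT 9: For the action of Q̂₈ = {±id, ±(i;0), ±j', ±k'} on T = ℍ/𝔞: every point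
with nontrivial stabilizer is 2-torsion; among the sixteen 2-torsion points exactly twelve
(the fixed points of (i;0), j', k') have stabilizer of order 4, and the remaining four
{1000, 0100, 0010, 1110} form a single Q̂₈-orbit of size 4, each with stabilizer
{id, −id} of order 2.  In particular T/Q̂₈ has exactly 6 orbits of points with stabilizer
of order 4 and exactly 1 orbit of points with stabilizer of order 2. -/

open scoped Quaternion

noncomputable def qi : ℍ[ℝ] := ⟨0, 1, 0, 0⟩
noncomputable def qj : ℍ[ℝ] := ⟨0, 0, 1, 0⟩
noncomputable def qk : ℍ[ℝ] := ⟨0, 0, 0, 1⟩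
noncomputable def qt : ℍ[ℝ] := (1 + qi + qj + qk) / 2
noncomputable def qα : ℍ[ℝ] := (1 + qi) / 2

/-- The Hurwitz order `𝔞 = ℤ·1 + ℤ·i + ℤ·j + ℤ·t` as an additive subgroup of `ℍ`. -/
noncomputable def hurwitz : AddSubgroup ℍ[ℝ] := AddSubgroup.closure {1, qi, qj, qt}

/-- The real torus `T = ℍ/𝔞`. -/
noncomputable abbrev T := ℍ[ℝ] ⧸ hurwitz

/-- The class map `ℍ → T = ℍ/𝔞`. -/
noncomputable def π : ℍ[ℝ] → T := QuotientAddGroup.mk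

/-! The squares of `±(i;0)`, `±j'`, `±k'` are all `-id`, so a point fixed by a nontrivial element of
`Q̂₈` satisfies `-x = x`: it is 2-torsion. Signs act trivially on the 2-torsion points, hence the
stabilizer of such a point has twice as many elements as there are maps fixing it among the
representatives `id, (i;0), j', k'` modulo sign. In the coordinates `abcd` these maps are affine
over `𝔽₂`, and the pair `(d, a + b + c)` decides which of them fix a point: the values `(0, 0)`,
`(1, 1)`, `(1, 0)` give the fixed points of `(i;0)`, `j'`, `k'`, and `(0, 1)` gives points fixed by
`id` alone. Each value is taken four times, so twelve points have a stabilizer of order 4 and four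
have one of order 2. The four representatives move `1000` to distinct points and `-id ≠ id`, so the
group has order 8, and by orbit–stabilizer there are `12 / 2 = 6` orbits of the first kind and
`4 / 4 = 1` of the second. -/

open MulAction Equiv

section GroupActions

variable {G X : Type*} [Group G] [MulAction G X]

theorem card_stabilizer_eq_of_mem_orbit {x y : X} (h : y ∈ orbit G x) :
    Nat.card (stabilizer G y) = Nat.card (stabilizer G x) :=
  Nat.card_congr (stabilizerEquivStabilizerOfOrbitRel h).toEquiv

theorem ncard_orbit_eq_card_div_card_stabilizer [Finite G] (x : X) :
    (orbit G x).ncard = Nat.card G / Nat.card (stabilizer G x) := by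
  rw [← index_stabilizer, ← (stabilizer G x).card_mul_index, Nat.mul_div_cancel_left _ Nat.card_pos]

theorem orbit_eq_setOf_card_stabilizer_eq [Finite G] {x : X}
    (hfin : {y : X | Nat.card (stabilizer G y) = Nat.card (stabilizer G x)}.Finite)
    (hcard : {y : X | Nat.card (stabilizer G y) = Nat.card (stabilizer G x)}.ncard ≤
      Nat.card G / Nat.card (stabilizer G x)) :
    orbit G x = {y : X | Nat.card (stabilizer G y) = Nat.card (stabilizer G x)} :=
  Set.eq_of_subset_of_ncard_le (fun _ ↦ card_stabilizer_eq_of_mem_orbit)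
    (hcard.trans_eq (ncard_orbit_eq_card_div_card_stabilizer x).symm) hfin

theorem ncard_orbits_mul_card_div [Finite G] (n : ℕ) :
    {s : Set X | ∃ x, s = orbit G x ∧ Nat.card (stabilizer G x) = n}.ncard * (Nat.card G / n) =
      {x : X | Nat.card (stabilizer G x) = n}.ncard := by
  let orbitMap : {x : X | Nat.card (stabilizer G x) = n} →
      {s : Set X | ∃ x, s = orbit G x ∧ Nat.card (stabilizer G x) = n} :=
    fun x ↦ ⟨orbit G x.1, x.1, rfl, x.2⟩
  have fiberEquiv : ∀ s, Nonempty ({x // orbitMap x = s} ≃ Fin (Nat.card G / n)) := by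
    rintro ⟨_, x, rfl, hx⟩
    let e : {y // orbitMap y = ⟨orbit G x, x, rfl, hx⟩} ≃ orbit G x :=
      { toFun := fun y ↦ ⟨y.1.1, orbit_eq_iff.1 (Subtype.ext_iff.1 y.2)⟩
        invFun := fun y ↦ ⟨⟨y.1, (card_stabilizer_eq_of_mem_orbit y.2).trans hx⟩,
          Subtype.ext (orbit_eq_iff.2 y.2)⟩ }
    have : Finite (orbit G x) := Set.finite_range _
    refine ⟨e.trans (Finite.equivFinOfCardEq ?_)⟩
    rw [Nat.card_coe_set_eq, ncard_orbit_eq_card_div_card_stabilizer, hx]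
  rw [← Nat.card_coe_set_eq, ← Nat.card_coe_set_eq,
    ← Nat.card_congr (sigmaFiberEquiv orbitMap),
    Nat.card_congr (sigmaEquivProdOfEquiv fun s ↦ (fiberEquiv s).some), Nat.card_prod, Nat.card_fin]

theorem card_mem_and_apply_eq_self (Q : Subgroup (Perm X)) (x : X) :
    Nat.card {g : Perm X // g ∈ Q ∧ g x = x} = Nat.card (stabilizer Q x) :=
  Nat.card_congr (subtypeSubtypeEquivSubtypeInter (· ∈ Q) (fun g ↦ g x = x)).symm

theorem setOf_exists_mem_apply_eq (Q : Subgroup (Perm X)) (x : X) :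
    {y : X | ∃ g ∈ Q, g x = y} = orbit Q x := by
  ext y
  simp [mem_orbit_iff, Subgroup.smul_def]

end GroupActions

section SignedPerm

variable {A ι : Type*} [AddCommGroup A]

/-- The permutations `± f m` of an abelian group, indexed by the sign and by `m`. -/
def signedPerm (f : ι → Perm A) (p : ℤˣ × ι) : Perm A := toPerm p.1 * f p.2

theorem signedPerm_apply (f : ι → Perm A) (s : ℤˣ) (m : ι) (x : A) :
    signedPerm f (s, m) x = s • f m x := rfl

theorem range_signedPerm_fin_four (f : Fin 4 → Perm A) (hf : f 0 = 1) :
    Set.range (signedPerm f) =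
      {1, Equiv.neg A, f 1, Equiv.neg A * f 1, f 2, Equiv.neg A * f 2, f 3, Equiv.neg A * f 3} := by
  have toPerm_one : toPerm (1 : ℤˣ) = (1 : Perm A) := by ext; simp
  have toPerm_neg_one : toPerm (-1 : ℤˣ) = Equiv.neg A := by ext; simp [Units.neg_smul]
  have univ_eq : (Set.univ : Set (ℤˣ × Fin 4)) =
      {(1, 0), (-1, 0), (1, 1), (-1, 1), (1, 2), (-1, 2), (1, 3), (-1, 3)} := by
    ext p
    revert p
    decide
  rw [← Set.image_univ, univ_eq]
  simp only [Set.image_insert_eq, Set.image_singleton, signedPerm, toPerm_one, toPerm_neg_one, hf,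
    one_mul, mul_one]

theorem intUnits_smul_eq_self {x : A} (hx : x + x = 0) (s : ℤˣ) : s • x = x := by
  obtain rfl | rfl := Int.units_eq_one_or s
  · exact one_smul _ x
  · simpa [Units.neg_smul] using neg_eq_of_add_eq_zero_left hx

theorem add_self_eq_zero_of_smul_apply_eq_self {f : A → A} (hf : ∀ x, f (f x) = -x)
    {s : ℤˣ} {x : A} (hx : s • f x = x) : x + x = 0 := by
  have map_neg (y : A) : f (-y) = -f y := by rw [← hf, ← hf (f y)]
  have map_smul (y : A) : f (s • y) = s • f y := by
    obtain rfl | rfl := Int.units_eq_one_or s <;> simp [Units.neg_smul, map_neg]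
  have : -x = x := by
    calc -x = s • s • f (f x) := by rw [smul_smul, Int.units_mul_self, one_smul, hf]
      _ = s • f (s • f x) := by rw [map_smul]
      _ = x := by rw [hx, hx]
  exact add_eq_zero_iff_neg_eq.2 this

theorem signedPerm_injective {f : ι → Perm A} {x y : A} (hx : ∀ m, f m x + f m x = 0)
    (hfx : Function.Injective fun m ↦ f m x) (hy : y + y ≠ 0) :
    Function.Injective (signedPerm f) := by
  rintro ⟨s, m⟩ ⟨s', m'⟩ h
  obtain rfl : m = m' := hfx <| by
    simpa [signedPerm_apply, intUnits_smul_eq_self (hx _)] using congr($h x)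
  have hs : s • y = s' • y := by simpa [signedPerm_apply] using congr($h ((f m).symm y))
  obtain rfl | rfl := Int.units_eq_one_or s <;> obtain rfl | rfl := Int.units_eq_one_or s' <;>
    simp_all [Units.neg_smul, add_eq_zero_iff_eq_neg, eq_comm]

theorem card_stabilizer_eq_two_mul {f : ι → Perm A} (hf : Function.Injective (signedPerm f))
    {Q : Subgroup (Perm A)} (hQ : (Q : Set (Perm A)) = Set.range (signedPerm f)) {x : A}
    (hx : ∀ m, f m x + f m x = 0) :
    Nat.card (stabilizer Q x) = 2 * {m | f m x = x}.ncard := by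
  have : {g | g ∈ Q ∧ g x = x} = signedPerm f '' (Set.univ ×ˢ {m | f m x = x}) := by
    ext g
    rw [Set.mem_ofPred_eq, ← SetLike.mem_coe, hQ]
    constructor
    · rintro ⟨⟨⟨s, m⟩, rfl⟩, hm⟩
      rw [signedPerm_apply, intUnits_smul_eq_self (hx m)] at hm
      exact ⟨(s, m), ⟨trivial, hm⟩, rfl⟩
    · rintro ⟨⟨s, m⟩, ⟨-, hm⟩, rfl⟩
      exact ⟨⟨(s, m), rfl⟩, by rw [signedPerm_apply, intUnits_smul_eq_self (hx m), hm]⟩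
  rw [← card_mem_and_apply_eq_self, ← Set.coe_ofPred, Nat.card_coe_set_eq, this,
    Set.ncard_image_of_injective _ hf, Set.ncard_prod, Set.ncard_univ, Nat.card_eq_fintype_card,
    Fintype.card_units_int]

end SignedPerm

section Coordinates

@[simp] theorem re_qi : qi.re = 0 := rfl
@[simp] theorem imI_qi : qi.imI = 1 := rfl
@[simp] theorem imJ_qi : qi.imJ = 0 := rfl
@[simp] theorem imK_qi : qi.imK = 0 := rfl
@[simp] theorem re_qj : qj.re = 0 := rfl
@[simp] theorem imI_qj : qj.imI = 0 := rfl
@[simp] theorem imJ_qj : qj.imJ = 1 := rfl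
@[simp] theorem imK_qj : qj.imK = 0 := rfl
@[simp] theorem re_qk : qk.re = 0 := rfl
@[simp] theorem imI_qk : qk.imI = 0 := rfl
@[simp] theorem imJ_qk : qk.imJ = 0 := rfl
@[simp] theorem imK_qk : qk.imK = 1 := rfl

theorem quaternion_div_two (q : ℍ[ℝ]) : q / 2 = (2⁻¹ : ℝ) • q := by
  rw [div_eq_mul_inv, show (2 : ℍ[ℝ]) = ((2 : ℝ) : ℍ[ℝ]) by norm_cast, ← Quaternion.coe_inv,
    Quaternion.mul_coe_eq_smul]

/-- The quaternion `a + b i + c j + d t` with coordinates in the `ℤ`-basis `1, i, j, t` of the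
Hurwitz order. -/
noncomputable def hurwitzComb (a b c d : ℝ) : ℍ[ℝ] := a • (1 : ℍ[ℝ]) + b • qi + c • qj + d • qt

@[simp] theorem re_hurwitzComb (a b c d : ℝ) : (hurwitzComb a b c d).re = a + d / 2 := by
  rw [hurwitzComb, qt, quaternion_div_two]
  simp [div_eq_mul_inv]

@[simp] theorem imI_hurwitzComb (a b c d : ℝ) : (hurwitzComb a b c d).imI = b + d / 2 := by
  rw [hurwitzComb, qt, quaternion_div_two]
  simp [div_eq_mul_inv]

@[simp] theorem imJ_hurwitzComb (a b c d : ℝ) : (hurwitzComb a b c d).imJ = c + d / 2 := by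
  rw [hurwitzComb, qt, quaternion_div_two]
  simp [div_eq_mul_inv]

@[simp] theorem imK_hurwitzComb (a b c d : ℝ) : (hurwitzComb a b c d).imK = d / 2 := by
  rw [hurwitzComb, qt, quaternion_div_two]
  simp [div_eq_mul_inv]

theorem hurwitzComb_add (a b c d a' b' c' d' : ℝ) :
    hurwitzComb a b c d + hurwitzComb a' b' c' d' =
      hurwitzComb (a + a') (b + b') (c + c') (d + d') := by
  simp only [hurwitzComb]
  module

theorem hurwitzComb_sub (a b c d a' b' c' d' : ℝ) :
    hurwitzComb a b c d - hurwitzComb a' b' c' d' =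
      hurwitzComb (a - a') (b - b') (c - c') (d - d') := by
  simp only [hurwitzComb]
  module

theorem hurwitzComb_inj {a b c d a' b' c' d' : ℝ} :
    hurwitzComb a b c d = hurwitzComb a' b' c' d' ↔ a = a' ∧ b = b' ∧ c = c' ∧ d = d' := by
  refine ⟨fun h ↦ ?_, by rintro ⟨rfl, rfl, rfl, rfl⟩; rfl⟩
  simp only [Quaternion.ext_iff, re_hurwitzComb, imI_hurwitzComb, imJ_hurwitzComb,
    imK_hurwitzComb] at h
  grind

theorem exists_eq_hurwitzComb (q : ℍ[ℝ]) : ∃ a b c d, q = hurwitzComb a b c d := by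
  refine ⟨q.re - q.imK, q.imI - q.imK, q.imJ - q.imK, 2 * q.imK, ?_⟩
  ext <;> simp

theorem qα_eq_hurwitzComb : qα = hurwitzComb 2⁻¹ 2⁻¹ 0 0 := by
  rw [qα, quaternion_div_two]
  ext <;> simp

theorem qi_mul_hurwitzComb (a b c d : ℝ) :
    qi * hurwitzComb a b c d = hurwitzComb (-b - c - d) (a - c) (-c - d) (2 * c + d) := by
  ext <;> simp <;> ring

theorem qj_mul_hurwitzComb (a b c d : ℝ) :
    qj * hurwitzComb a b c d = hurwitzComb (b - c) (b + d) (a + b + d) (-(2 * b) - d) := by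
  ext <;> simp <;> ring

theorem qk_mul_hurwitzComb (a b c d : ℝ) :
    qk * hurwitzComb a b c d = hurwitzComb (-a - d) (-a - c - d) (b - a) (2 * a + d) := by
  ext <;> simp <;> ring

theorem mem_hurwitz_iff {q : ℍ[ℝ]} : q ∈ hurwitz ↔ ∃ a b c d : ℤ, hurwitzComb a b c d = q := by
  rw [hurwitz]
  simp only [Set.insert_eq, AddSubgroup.closure_union]
  simp [AddSubgroup.mem_sup, AddSubgroup.mem_closure_singleton, hurwitzComb, add_assoc,
    Int.cast_smul_eq_zsmul]

theorem hurwitzComb_mem_hurwitz_iff {a b c d : ℝ} :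
    hurwitzComb a b c d ∈ hurwitz ↔
      (∃ n : ℤ, n = a) ∧ (∃ n : ℤ, n = b) ∧ (∃ n : ℤ, n = c) ∧ (∃ n : ℤ, n = d) := by
  simp [mem_hurwitz_iff, hurwitzComb_inj]

theorem π_eq_π_iff {x y : ℍ[ℝ]} : π x = π y ↔ x - y ∈ hurwitz :=
  QuotientAddGroup.eq_iff_sub_mem

theorem π_surjective : Function.Surjective π := QuotientAddGroup.mk_surjective

end Coordinates

section TorsionPoints

/-- Indices `(a, b, c, d)` of the sixteen points of order dividing two. -/
abbrev TorsionIndex : Type := ZMod 2 × ZMod 2 × ZMod 2 × ZMod 2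

/-- The 2-torsion point `abcd = [a/2 + (b/2) i + (c/2) j + (d/2) t]` of `T`, for `v = (a, b, c, d)`;
residues modulo 2 are represented by `0` and `1`. -/
noncomputable def torsionPoint (v : TorsionIndex) : T :=
  π (hurwitzComb (v.1.val / 2) (v.2.1.val / 2) (v.2.2.1.val / 2) (v.2.2.2.val / 2))

theorem exists_intCast_eq_half_sub_half_iff (a b : ℤ) :
    (∃ n : ℤ, (n : ℝ) = a / 2 - b / 2) ↔ (a : ZMod 2) = b := by
  rw [eq_comm, ZMod.intCast_eq_intCast_iff_dvd_sub, dvd_def]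
  refine exists_congr fun n ↦ ?_
  rify
  constructor <;> intro h <;> linarith

theorem π_hurwitzComb_half_eq_iff (a b c d a' b' c' d' : ℤ) :
    π (hurwitzComb (a / 2) (b / 2) (c / 2) (d / 2)) =
        π (hurwitzComb (a' / 2) (b' / 2) (c' / 2) (d' / 2)) ↔
      (a : ZMod 2) = a' ∧ (b : ZMod 2) = b' ∧ (c : ZMod 2) = c' ∧ (d : ZMod 2) = d' := by
  simp only [π_eq_π_iff, hurwitzComb_sub, hurwitzComb_mem_hurwitz_iff,
    exists_intCast_eq_half_sub_half_iff]

theorem torsionPoint_intCast (a b c d : ℤ) :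
    torsionPoint (a, b, c, d) = π (hurwitzComb (a / 2) (b / 2) (c / 2) (d / 2)) := by
  simpa [torsionPoint] using
    π_hurwitzComb_half_eq_iff (a : ZMod 2).val (b : ZMod 2).val (c : ZMod 2).val (d : ZMod 2).val
      a b c d

theorem torsionPoint_injective : Function.Injective torsionPoint := by
  rintro ⟨a, b, c, d⟩ ⟨a', b', c', d'⟩ h
  simpa using (π_hurwitzComb_half_eq_iff a.val b.val c.val d.val a'.val b'.val c'.val d'.val).1
    (by simpa [torsionPoint] using h)

theorem π_hurwitzComb_add_self_eq_zero_iff {a b c d : ℝ} :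
    π (hurwitzComb a b c d) + π (hurwitzComb a b c d) = 0 ↔
      (∃ n : ℤ, n = a + a) ∧ (∃ n : ℤ, n = b + b) ∧ (∃ n : ℤ, n = c + c) ∧ ∃ n : ℤ, n = d + d := by
  rw [← hurwitzComb_mem_hurwitz_iff, ← hurwitzComb_add]
  exact QuotientAddGroup.eq_zero_iff _

theorem add_self_eq_zero_iff_mem_range_torsionPoint {x : T} :
    x + x = 0 ↔ x ∈ Set.range torsionPoint := by
  constructor
  · intro hx
    obtain ⟨q, rfl⟩ := π_surjective x
    obtain ⟨a, b, c, d, rfl⟩ := exists_eq_hurwitzComb q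
    obtain ⟨⟨k, hk⟩, ⟨l, hl⟩, ⟨m, hm⟩, ⟨n, hn⟩⟩ := π_hurwitzComb_add_self_eq_zero_iff.1 hx
    refine ⟨(k, l, m, n), ?_⟩
    rw [torsionPoint_intCast, hk, hl, hm, hn]
    simp only [add_self_div_two]
  · rintro ⟨⟨a, b, c, d⟩, rfl⟩
    exact π_hurwitzComb_add_self_eq_zero_iff.2
      ⟨⟨a.val, by simp⟩, ⟨b.val, by simp⟩, ⟨c.val, by simp⟩, ⟨d.val, by simp⟩⟩

theorem torsionPoint_add_self (v : TorsionIndex) : torsionPoint v + torsionPoint v = 0 :=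
  add_self_eq_zero_iff_mem_range_torsionPoint.2 ⟨v, rfl⟩

theorem exists_add_self_ne_zero : ∃ x : T, x + x ≠ 0 := by
  refine ⟨π (hurwitzComb (1 / 4) 0 0 0), fun h ↦ ?_⟩
  obtain ⟨n, hn⟩ := (π_hurwitzComb_add_self_eq_zero_iff.1 h).1
  have : 2 * n = 1 := by rify; linarith
  lia

/-- The pair `(d, a + b + c)` attached to the 2-torsion point `abcd`. Its four values separate the
fixed points of `(i;0)`, of `j'`, of `k'`, and the points fixed by none of them. -/
def torsionClass (v : TorsionIndex) : ZMod 2 × ZMod 2 := (v.2.2.2, v.1 + v.2.1 + v.2.2.1)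

theorem exceptionalPoints_eq :
    ({π (1 / 2), π (qi / 2), π (qj / 2), π ((1 + qi + qj) / 2)} : Set T) =
      torsionPoint '' {v | torsionClass v = (0, 1)} := by
  have hclass : {v | torsionClass v = (0, 1)} =
      {(1, 0, 0, 0), (0, 1, 0, 0), (0, 0, 1, 0), (1, 1, 1, 0)} := by
    ext v
    revert v
    decide
  have hpoint (a b c d : ℤ) :
      π ((a • 1 + b • qi + c • qj + d • qt) / 2) = torsionPoint (a, b, c, d) := by
    rw [torsionPoint_intCast, hurwitzComb, quaternion_div_two]
    congr 1
    module
  have h1000 : π (1 / 2) = torsionPoint (1, 0, 0, 0) := by simpa using hpoint 1 0 0 0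
  have h0100 : π (qi / 2) = torsionPoint (0, 1, 0, 0) := by simpa using hpoint 0 1 0 0
  have h0010 : π (qj / 2) = torsionPoint (0, 0, 1, 0) := by simpa using hpoint 0 0 1 0
  have h1110 : π ((1 + qi + qj) / 2) = torsionPoint (1, 1, 1, 0) := by simpa using hpoint 1 1 1 0
  rw [hclass, h1000, h0100, h0010, h1110]
  simp only [Set.image_insert_eq, Set.image_singleton]

theorem ncard_torsionPoint_image_torsionClass_ne :
    (torsionPoint '' {v | torsionClass v ≠ (0, 1)}).ncard = 12 := by
  rw [Set.ncard_image_of_injective _ torsionPoint_injective, Set.ncard_eq_toFinset_card']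
  decide

theorem ncard_torsionPoint_image_torsionClass_eq :
    (torsionPoint '' {v | torsionClass v = (0, 1)}).ncard = 4 := by
  rw [Set.ncard_image_of_injective _ torsionPoint_injective, Set.ncard_eq_toFinset_card']
  decide

theorem setOf_add_self_eq_zero_diff_torsionPoint_image :
    {x : T | x + x = 0} \ torsionPoint '' {v | torsionClass v ≠ (0, 1)} =
      torsionPoint '' {v | torsionClass v = (0, 1)} := by
  have : {x : T | x + x = 0} = torsionPoint '' Set.univ := by
    ext x
    rw [Set.image_univ, ← add_self_eq_zero_iff_mem_range_torsionPoint, Set.mem_ofPred_eq]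
  rw [this, ← Set.image_sdiff torsionPoint_injective]
  congr 1
  ext v
  simp

end TorsionPoints

section AffineMaps

/-- `f` is the affine bijection `(q;r) : x ↦ q x + [r]` of `T`. -/
def IsAffinePerm (q r : ℍ[ℝ]) (f : Perm T) : Prop := ∀ x, f (π x) = π (q * x + r)

variable {f : Perm T}

theorem IsAffinePerm.apply_apply_eq_neg {q r : ℍ[ℝ]} (hf : IsAffinePerm q r f)
    (hq : q * q = -1) (hr : q * r + r ∈ hurwitz) (x : T) : f (f x) = -x := by
  obtain ⟨x, rfl⟩ := π_surjective x
  rw [hf, hf]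
  refine π_eq_π_iff.2 ?_
  convert hr using 1
  rw [mul_add, ← mul_assoc, hq]
  noncomm_ring

theorem IsAffinePerm.apply_torsionPoint_qi (hf : IsAffinePerm qi 0 f) (a b c d : ℤ) :
    f (torsionPoint (a, b, c, d)) = torsionPoint (b + c + d, a + c, c + d, d) := by
  calc
    _ = π (hurwitzComb (((-b - c - d : ℤ) : ℝ) / 2) (((a - c : ℤ) : ℝ) / 2)
          (((-c - d : ℤ) : ℝ) / 2) (((2 * c + d : ℤ) : ℝ) / 2)) := by
      rw [torsionPoint_intCast, hf, qi_mul_hurwitzComb, add_zero]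
      congr 2 <;> push_cast <;> ring
    _ = _ := by
      rw [← torsionPoint_intCast]
      simp [CharTwo.sub_eq_add, CharTwo.two_eq_zero]

theorem IsAffinePerm.apply_torsionPoint_qj (hf : IsAffinePerm qj qα f) (a b c d : ℤ) :
    f (torsionPoint (a, b, c, d)) =
      torsionPoint (b + c + 1, b + d + 1, a + b + d, d) := by
  calc
    _ = π (hurwitzComb (((b - c + 1 : ℤ) : ℝ) / 2) (((b + d + 1 : ℤ) : ℝ) / 2)
          (((a + b + d : ℤ) : ℝ) / 2) (((-(2 * b) - d : ℤ) : ℝ) / 2)) := by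
      rw [torsionPoint_intCast, hf, qj_mul_hurwitzComb, qα_eq_hurwitzComb, hurwitzComb_add]
      congr 2 <;> push_cast <;> ring
    _ = _ := by
      rw [← torsionPoint_intCast]
      simp [CharTwo.sub_eq_add, CharTwo.two_eq_zero]

theorem IsAffinePerm.apply_torsionPoint_qk (hf : IsAffinePerm qk qα f) (a b c d : ℤ) :
    f (torsionPoint (a, b, c, d)) =
      torsionPoint (a + d + 1, a + c + d + 1, a + b, d) := by
  calc
    _ = π (hurwitzComb (((-a - d + 1 : ℤ) : ℝ) / 2) (((-a - c - d + 1 : ℤ) : ℝ) / 2)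
          (((b - a : ℤ) : ℝ) / 2) (((2 * a + d : ℤ) : ℝ) / 2)) := by
      rw [torsionPoint_intCast, hf, qk_mul_hurwitzComb, qα_eq_hurwitzComb, hurwitzComb_add]
      congr 2 <;> push_cast <;> ring
    _ = _ := by
      rw [← torsionPoint_intCast]
      simp [CharTwo.sub_eq_add, CharTwo.two_eq_zero, add_comm]

theorem eq_neg_mul_of_apply_π {g : Perm T} {r : ℍ[ℝ] → ℍ[ℝ]} (hg : ∀ x, g (π x) = π (-r x))
    (hf : ∀ x, f (π x) = π (r x)) : g = Equiv.neg T * f := by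
  refine Equiv.ext (π_surjective.forall.2 fun x ↦ ?_)
  rw [hg, Perm.mul_apply, hf]
  rfl

end AffineMaps

section Qhat8

/-- The action of `id, (i;0), j', k'` (in this order) on the indices of the 2-torsion points. -/
def torsionIndexMap : Fin 4 → TorsionIndex → TorsionIndex
  | 0, v => v
  | 1, (a, b, c, d) => (b + c + d, a + c, c + d, d)
  | 2, (a, b, c, d) => (b + c + 1, b + d + 1, a + b + d, d)
  | 3, (a, b, c, d) => (a + d + 1, a + c + d + 1, a + b, d)

/-- The value of `torsionClass` at the 2-torsion points fixed by `(i;0)`, `j'` and `k'`, for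
`m = 1, 2, 3` respectively; the remaining value is put at `m = 0`. -/
def fixedClass : Fin 4 → ZMod 2 × ZMod 2 := ![(0, 1), (0, 0), (1, 1), (1, 0)]

theorem torsionIndexMap_eq_self_iff :
    ∀ m ≠ 0, ∀ v, torsionIndexMap m v = v ↔ torsionClass v = fixedClass m := by
  decide

/-- `Q` is the group `Q̂₈ = {±id, ±(i;0), ±j', ±k'}`, and `f` lists the representatives
`id, (i;0), j', k'` of its classes modulo sign. -/
structure IsQhat8 (Q : Subgroup (Perm T)) (f : Fin 4 → Perm T) : Prop where
  coe_eq_range : (Q : Set (Perm T)) = Set.range (signedPerm f)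
  zero_eq_one : f 0 = 1
  isAffinePerm_one : IsAffinePerm qi 0 (f 1)
  isAffinePerm_two : IsAffinePerm qj qα (f 2)
  isAffinePerm_three : IsAffinePerm qk qα (f 3)

namespace IsQhat8

variable {Q : Subgroup (Perm T)} {f : Fin 4 → Perm T}

theorem apply_apply_eq_neg (h : IsQhat8 Q f) {m : Fin 4} (hm : m ≠ 0) (x : T) :
    f m (f m x) = -x := by
  have mem (a b c d : ℤ) : hurwitzComb a b c d ∈ hurwitz := mem_hurwitz_iff.2 ⟨a, b, c, d, rfl⟩
  fin_cases m
  · contradiction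
  · refine h.isAffinePerm_one.apply_apply_eq_neg (by ext <;> simp) ?_ x
    simp
  · refine h.isAffinePerm_two.apply_apply_eq_neg (by ext <;> simp) ?_ x
    convert mem 1 1 1 (-1) using 1
    rw [qα_eq_hurwitzComb, qj_mul_hurwitzComb, hurwitzComb_add]
    norm_num
  · refine h.isAffinePerm_three.apply_apply_eq_neg (by ext <;> simp) ?_ x
    convert mem 0 0 0 1 using 1
    rw [qα_eq_hurwitzComb, qk_mul_hurwitzComb, hurwitzComb_add]
    norm_num

theorem add_self_eq_zero_of_apply_eq_self (h : IsQhat8 Q f) {x : T} {g : Perm T} (hg : g ∈ Q)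
    (hg1 : g ≠ 1) (hx : g x = x) : x + x = 0 := by
  rw [← SetLike.mem_coe, h.coe_eq_range] at hg
  obtain ⟨⟨s, m⟩, rfl⟩ := hg
  rw [signedPerm_apply] at hx
  by_cases hm : m = 0
  · subst hm
    obtain rfl | rfl := Int.units_eq_one_or s
    · exact absurd (by ext; simp [signedPerm_apply, h.zero_eq_one]) hg1
    · exact add_eq_zero_iff_neg_eq.2 (by simpa [h.zero_eq_one, Units.neg_smul] using hx)
  · exact add_self_eq_zero_of_smul_apply_eq_self (h.apply_apply_eq_neg hm) hx

theorem apply_torsionPoint (h : IsQhat8 Q f) (m : Fin 4) (v : TorsionIndex) :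
    f m (torsionPoint v) = torsionPoint (torsionIndexMap m v) := by
  obtain ⟨a, b, c, d⟩ := v
  obtain ⟨a, rfl⟩ := ZMod.intCast_surjective a
  obtain ⟨b, rfl⟩ := ZMod.intCast_surjective b
  obtain ⟨c, rfl⟩ := ZMod.intCast_surjective c
  obtain ⟨d, rfl⟩ := ZMod.intCast_surjective d
  fin_cases m
  · exact congr($h.zero_eq_one _)
  · exact h.isAffinePerm_one.apply_torsionPoint_qi a b c d
  · exact h.isAffinePerm_two.apply_torsionPoint_qj a b c d
  · exact h.isAffinePerm_three.apply_torsionPoint_qk a b c d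

theorem apply_torsionPoint_eq_self_iff (h : IsQhat8 Q f) {m : Fin 4} (hm : m ≠ 0)
    (v : TorsionIndex) :
    f m (torsionPoint v) = torsionPoint v ↔ torsionClass v = fixedClass m := by
  rw [h.apply_torsionPoint, torsionPoint_injective.eq_iff, torsionIndexMap_eq_self_iff m hm]

theorem apply_torsionPoint_add_self (h : IsQhat8 Q f) (v : TorsionIndex) (m : Fin 4) :
    f m (torsionPoint v) + f m (torsionPoint v) = 0 := by
  rw [h.apply_torsionPoint, torsionPoint_add_self]

theorem setOf_apply_eq_self (h : IsQhat8 Q f) {m : Fin 4} (hm : m ≠ 0) :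
    {x | f m x = x} = torsionPoint '' {v | torsionClass v = fixedClass m} := by
  ext x
  constructor
  · intro hx
    have hx0 : x + x = 0 := add_self_eq_zero_of_smul_apply_eq_self (s := 1)
      (h.apply_apply_eq_neg hm) (by rwa [one_smul])
    obtain ⟨v, rfl⟩ := add_self_eq_zero_iff_mem_range_torsionPoint.1 hx0
    exact ⟨v, (h.apply_torsionPoint_eq_self_iff hm v).1 hx, rfl⟩
  · rintro ⟨v, hv, rfl⟩
    exact (h.apply_torsionPoint_eq_self_iff hm v).2 hv

theorem fixedPoints_union_eq (h : IsQhat8 Q f) :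
    {x | f 1 x = x} ∪ {x | f 2 x = x} ∪ {x | f 3 x = x} =
      torsionPoint '' {v | torsionClass v ≠ (0, 1)} := by
  rw [h.setOf_apply_eq_self (by decide), h.setOf_apply_eq_self (by decide),
    h.setOf_apply_eq_self (by decide), ← Set.image_union, ← Set.image_union]
  congr 1
  ext v
  revert v
  decide

theorem injective_signedPerm (h : IsQhat8 Q f) : Function.Injective (signedPerm f) := by
  obtain ⟨y, hy⟩ := exists_add_self_ne_zero
  have free : Function.Injective fun m ↦ torsionIndexMap m (1, 0, 0, 0) := by decide
  refine signedPerm_injective (h.apply_torsionPoint_add_self (1, 0, 0, 0)) ?_ hy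
  simp only [h.apply_torsionPoint]
  exact torsionPoint_injective.comp free

theorem card_eq (h : IsQhat8 Q f) : Nat.card Q = 8 := by
  rw [← SetLike.coe_sort_coe, h.coe_eq_range, Nat.card_coe_set_eq,
    Set.ncard_range_of_injective h.injective_signedPerm]
  simp [Nat.card_eq_fintype_card]

theorem card_stabilizer_torsionPoint (h : IsQhat8 Q f) (v : TorsionIndex) :
    Nat.card (stabilizer Q (torsionPoint v)) = if torsionClass v = (0, 1) then 2 else 4 := by
  have hfixed : {m | f m (torsionPoint v) = torsionPoint v} =
      {m | m = 0 ∨ torsionClass v = fixedClass m} := by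
    ext m
    obtain rfl | hm := eq_or_ne m 0
    · simp [h.zero_eq_one]
    · simp [h.apply_torsionPoint_eq_self_iff hm, hm]
  rw [card_stabilizer_eq_two_mul h.injective_signedPerm h.coe_eq_range
    (h.apply_torsionPoint_add_self v), hfixed, Set.ncard_eq_toFinset_card']
  generalize torsionClass v = κ
  revert κ
  decide

theorem card_stabilizer_eq_one (h : IsQhat8 Q f) {x : T} (hx : x + x ≠ 0) :
    Nat.card (stabilizer Q x) = 1 := by
  rw [Subgroup.card_eq_one, Subgroup.eq_bot_iff_forall]
  rintro ⟨g, hg⟩ hgx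
  by_contra hg1
  exact hx (h.add_self_eq_zero_of_apply_eq_self hg (by simpa using hg1) hgx)

theorem setOf_card_stabilizer_eq (h : IsQhat8 Q f) {n : ℕ} (hn : n ≠ 1) :
    {x : T | Nat.card (stabilizer Q x) = n} =
      torsionPoint '' {v | (if torsionClass v = (0, 1) then 2 else 4) = n} := by
  ext x
  constructor
  · intro hx
    obtain ⟨v, rfl⟩ := add_self_eq_zero_iff_mem_range_torsionPoint.1 <|
      of_not_not fun hx0 ↦ hn (hx.symm.trans (h.card_stabilizer_eq_one hx0))
    exact ⟨v, (h.card_stabilizer_torsionPoint v).symm.trans hx, rfl⟩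
  · rintro ⟨v, hv, rfl⟩
    exact (h.card_stabilizer_torsionPoint v).trans hv

theorem setOf_card_stabilizer_eq_four (h : IsQhat8 Q f) :
    {x : T | Nat.card (stabilizer Q x) = 4} = torsionPoint '' {v | torsionClass v ≠ (0, 1)} := by
  rw [h.setOf_card_stabilizer_eq (by decide)]
  congr! 3
  split_ifs <;> simp_all

theorem setOf_add_self_eq_zero_and_card_stabilizer_eq_four (h : IsQhat8 Q f) :
    {x : T | x + x = 0 ∧ Nat.card (stabilizer Q x) = 4} =
      {x | f 1 x = x} ∪ {x | f 2 x = x} ∪ {x | f 3 x = x} := by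
  rw [h.fixedPoints_union_eq, ← h.setOf_card_stabilizer_eq_four]
  refine Set.ext fun x ↦ ⟨And.right, fun hx ↦ ⟨?_, hx⟩⟩
  obtain ⟨v, -, rfl⟩ := h.setOf_card_stabilizer_eq_four.subset hx
  exact torsionPoint_add_self v

theorem setOf_card_stabilizer_eq_two (h : IsQhat8 Q f) :
    {x : T | Nat.card (stabilizer Q x) = 2} = torsionPoint '' {v | torsionClass v = (0, 1)} := by
  rw [h.setOf_card_stabilizer_eq (by decide)]
  congr! 3
  split_ifs <;> simp_all

theorem orbit_eq_of_card_stabilizer_eq_two (h : IsQhat8 Q f) {x : T}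
    (hx : Nat.card (stabilizer Q x) = 2) :
    orbit Q x = torsionPoint '' {v | torsionClass v = (0, 1)} := by
  have : Finite Q := Nat.finite_of_card_ne_zero (by simp [h.card_eq])
  rw [orbit_eq_setOf_card_stabilizer_eq, hx, h.setOf_card_stabilizer_eq_two]
  · rw [hx, h.setOf_card_stabilizer_eq_two]
    exact Set.toFinite _
  · rw [hx, h.setOf_card_stabilizer_eq_two, h.card_eq, ncard_torsionPoint_image_torsionClass_eq]

theorem setOf_mem_apply_eq_self_of_card_stabilizer_eq_two (h : IsQhat8 Q f) {x : T}
    (hx : Nat.card (stabilizer Q x) = 2) :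
    {g | g ∈ Q ∧ g x = x} = {1, Equiv.neg T} := by
  obtain ⟨v, -, rfl⟩ := h.setOf_card_stabilizer_eq_two.subset hx
  have neg_mem : Equiv.neg T ∈ Q := by
    rw [← SetLike.mem_coe, h.coe_eq_range]
    exact ⟨(-1, 0), by ext; simp [signedPerm_apply, h.zero_eq_one, Units.neg_smul]⟩
  have one_ne_neg : (1 : Perm T) ≠ Equiv.neg T := by
    obtain ⟨y, hy⟩ := exists_add_self_ne_zero
    exact fun heq ↦ hy (add_eq_zero_iff_eq_neg.2 congr($heq y))
  rw [← card_mem_and_apply_eq_self, ← Set.coe_ofPred, Nat.card_coe_set_eq] at hx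
  refine (Set.eq_of_subset_of_ncard_le ?_ ?_ (Set.finite_of_ncard_ne_zero (by simp [hx]))).symm
  · rintro _ (rfl | rfl)
    · exact ⟨one_mem Q, rfl⟩
    · exact ⟨neg_mem, neg_eq_of_add_eq_zero_left (torsionPoint_add_self v)⟩
  · rw [hx, Set.ncard_pair one_ne_neg]

theorem ncard_orbits_of_card_stabilizer_eq_four (h : IsQhat8 Q f) :
    {s : Set T | ∃ x, s = orbit Q x ∧ Nat.card (stabilizer Q x) = 4}.ncard = 6 := by
  have : Finite Q := Nat.finite_of_card_ne_zero (by simp [h.card_eq])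
  have := ncard_orbits_mul_card_div (G := Q) (X := T) 4
  rw [h.setOf_card_stabilizer_eq_four, ncard_torsionPoint_image_torsionClass_ne, h.card_eq] at this
  lia

theorem ncard_orbits_of_card_stabilizer_eq_two (h : IsQhat8 Q f) :
    {s : Set T | ∃ x, s = orbit Q x ∧ Nat.card (stabilizer Q x) = 2}.ncard = 1 := by
  have : Finite Q := Nat.finite_of_card_ne_zero (by simp [h.card_eq])
  have := ncard_orbits_mul_card_div (G := Q) (X := T) 2
  rw [h.setOf_card_stabilizer_eq_two, ncard_torsionPoint_image_torsionClass_eq, h.card_eq] at this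
  lia

end IsQhat8

end Qhat8

theorem Qhat8_action_stabilizers_and_orbits
    (fi fj fk fneg fnegi fnegj fnegk : Equiv.Perm T)
    (hfi : ∀ x : ℍ[ℝ], fi (π x) = π (qi * x))
    (hfj : ∀ x : ℍ[ℝ], fj (π x) = π (qj * x + qα))
    (hfk : ∀ x : ℍ[ℝ], fk (π x) = π (qk * x + qα))
    (hfneg : ∀ x : ℍ[ℝ], fneg (π x) = π (-x))
    (hfnegi : ∀ x : ℍ[ℝ], fnegi (π x) = π (-(qi * x)))
    (hfnegj : ∀ x : ℍ[ℝ], fnegj (π x) = π (-(qj * x + qα)))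
    (hfnegk : ∀ x : ℍ[ℝ], fnegk (π x) = π (-(qk * x + qα)))
    (Q : Subgroup (Equiv.Perm T))
    (hQ : (Q : Set (Equiv.Perm T)) = {1, fneg, fi, fnegi, fj, fnegj, fk, fnegk}) :
    -- every point with nontrivial stabilizer is a 2-torsion point
    (∀ x : T, (∃ g ∈ Q, g ≠ 1 ∧ g x = x) → x + x = 0) ∧
    -- the 2-torsion points with stabilizer of order 4 are exactly the fixed points
    -- of (i;0), j' and k', and there are exactly twelve of them
    ({x : T | x + x = 0 ∧ Nat.card {g : Equiv.Perm T // g ∈ Q ∧ g x = x} = 4} =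
      {x : T | fi x = x} ∪ {x : T | fj x = x} ∪ {x : T | fk x = x}) ∧
    Set.ncard ({x : T | fi x = x} ∪ {x : T | fj x = x} ∪ {x : T | fk x = x}) = 12 ∧
    -- the remaining four 2-torsion points are {1000, 0100, 0010, 1110}
    ({x : T | x + x = 0} \
        ({x : T | fi x = x} ∪ {x : T | fj x = x} ∪ {x : T | fk x = x}) =
      ({π (1 / 2), π (qi / 2), π (qj / 2), π ((1 + qi + qj) / 2)} : Set T)) ∧
    Set.ncard ({π (1 / 2), π (qi / 2), π (qj / 2), π ((1 + qi + qj) / 2)} : Set T) = 4 ∧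
    -- these four points form a single Q̂₈-orbit
    (∀ x ∈ ({π (1 / 2), π (qi / 2), π (qj / 2), π ((1 + qi + qj) / 2)} : Set T),
      {y : T | ∃ g ∈ Q, g x = y} =
        ({π (1 / 2), π (qi / 2), π (qj / 2), π ((1 + qi + qj) / 2)} : Set T)) ∧
    -- each of them has stabilizer {id, −id}, of order 2
    (∀ x ∈ ({π (1 / 2), π (qi / 2), π (qj / 2), π ((1 + qi + qj) / 2)} : Set T),
      {g : Equiv.Perm T | g ∈ Q ∧ g x = x} = {1, fneg} ∧
      Nat.card {g : Equiv.Perm T // g ∈ Q ∧ g x = x} = 2) ∧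
    -- exactly 6 orbits of points with stabilizer of order 4
    Set.ncard {s : Set T | ∃ x : T, s = {y : T | ∃ g ∈ Q, g x = y} ∧
      Nat.card {g : Equiv.Perm T // g ∈ Q ∧ g x = x} = 4} = 6 ∧
    -- exactly 1 orbit of points with stabilizer of order 2
    Set.ncard {s : Set T | ∃ x : T, s = {y : T | ∃ g ∈ Q, g x = y} ∧
      Nat.card {g : Equiv.Perm T // g ∈ Q ∧ g x = x} = 2} = 1 := by
  obtain rfl : fneg = Equiv.neg T * 1 := eq_neg_mul_of_apply_π hfneg fun _ ↦ rfl
  obtain rfl := eq_neg_mul_of_apply_π hfnegi hfi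
  obtain rfl := eq_neg_mul_of_apply_π hfnegj hfj
  obtain rfl := eq_neg_mul_of_apply_π hfnegk hfk
  rw [mul_one] at hQ ⊢
  have h : IsQhat8 Q ![1, fi, fj, fk] :=
    ⟨hQ.trans (range_signedPerm_fin_four ![1, fi, fj, fk] rfl).symm, rfl,
      fun x ↦ by rw [add_zero]; exact hfi x, hfj, hfk⟩
  have hfix : {x | fi x = x} ∪ {x | fj x = x} ∪ {x | fk x = x} = _ := h.fixedPoints_union_eq
  have hcard := h.setOf_card_stabilizer_eq_two.superset
  simp only [card_mem_and_apply_eq_self, setOf_exists_mem_apply_eq]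
  rw [exceptionalPoints_eq]
  exact ⟨fun x ⟨g, hg, hg1, hgx⟩ ↦ h.add_self_eq_zero_of_apply_eq_self hg hg1 hgx,
    h.setOf_add_self_eq_zero_and_card_stabilizer_eq_four,
    hfix ▸ ncard_torsionPoint_image_torsionClass_ne,
    hfix ▸ setOf_add_self_eq_zero_diff_torsionPoint_image,
    ncard_torsionPoint_image_torsionClass_eq,
    fun x hx ↦ h.orbit_eq_of_card_stabilizer_eq_two (hcard hx),
    fun x hx ↦ ⟨h.setOf_mem_apply_eq_self_of_card_stabilizer_eq_two (hcard hx), hcard hx⟩,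
    h.ncard_orbits_of_card_stabilizer_eq_four, h.ncard_orbits_of_card_stabilizer_eq_two⟩
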